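/- arXiv:1402.1384 — 2 statements merged into one kernel-verified Lean document; each statement's English description precedes it below -/
import Mathlib

section
/- For every ρ ∈ [0,1], R ∈ ℝ and Σ > 0, the function s ↦ log Z(R,√s) (the log-partition function viewed as a function of the variance s = Σ²) has derivative at s = Σ² equal to ((f_a(R,Σ) − R)² + f_c(R,Σ))/(2Σ⁴). -/
/-!
In the natural parameter `t = 1/s`, the log-partition function is the cumulant generating function
of `x ↦ -(x - R)² / 2` under the prior, so its `t`-derivative is the mean of `-(x - R)² / 2` under
the tilted measure, which is the posterior. The chain rule contributes `-1/s²`, and the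
bias-variance decomposition splits the posterior mean of `(x - R)²` into the squared bias of the
posterior mean plus the posterior variance.
-/

open MeasureTheory ProbabilityTheory

/-- The prior `P₀ = ρ·N(0,1) + (1-ρ)·δ₀`. -/
noncomputable def P0 (ρ : ℝ) : Measure ℝ :=
  ENNReal.ofReal ρ • gaussianReal 0 1 + ENNReal.ofReal (1 - ρ) • Measure.dirac 0

/-- Partition function `Z(R,Σ) = ∫ exp(-(x-R)²/(2Σ²)) dP₀(x)`. -/
noncomputable def Zpart (ρ R σ : ℝ) : ℝ :=
  ∫ x, Real.exp (-(x - R) ^ 2 / (2 * σ ^ 2)) ∂(P0 ρ)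

/-- Posterior mean `f_a(R,Σ)`. -/
noncomputable def fa (ρ R σ : ℝ) : ℝ :=
  (Zpart ρ R σ)⁻¹ * ∫ x, x * Real.exp (-(x - R) ^ 2 / (2 * σ ^ 2)) ∂(P0 ρ)

/-- Posterior variance `f_c(R,Σ)`. -/
noncomputable def fc (ρ R σ : ℝ) : ℝ :=
  (Zpart ρ R σ)⁻¹ * (∫ x, x ^ 2 * Real.exp (-(x - R) ^ 2 / (2 * σ ^ 2)) ∂(P0 ρ))
    - fa ρ R σ ^ 2

section ExponentialTilting

variable {Ω : Type*} [MeasurableSpace Ω] {μ : Measure Ω} {X : Ω → ℝ}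

lemma mem_interior_integrableExpSet_of_nonpos [IsFiniteMeasure μ] (hX : AEMeasurable X μ)
    (hX_nonpos : ∀ᵐ ω ∂μ, X ω ≤ 0) {t : ℝ} (ht : 0 < t) :
    t ∈ interior (integrableExpSet X μ) := by
  refine interior_maximal (fun u (hu : 0 < u) ↦ ?_) isOpen_Ioi ht
  refine Integrable.of_bound (by fun_prop) 1 ?_
  filter_upwards [hX_nonpos] with ω hω
  rw [Real.norm_of_nonneg (Real.exp_nonneg _)]
  exact Real.exp_le_one_iff.2 (mul_nonpos_of_nonneg_of_nonpos hu.le hω)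

lemma hasDerivAt_cgf_inv {s : ℝ} (hs : s ≠ 0) (h : s⁻¹ ∈ interior (integrableExpSet X μ)) :
    HasDerivAt (fun u ↦ cgf X μ u⁻¹) (-(μ.tilted (s⁻¹ * X ·))[X] / s ^ 2) s := by
  have h_cgf : HasDerivAt (cgf X μ) ((μ.tilted (s⁻¹ * X ·))[X]) s⁻¹ :=
    integral_tilted_mul_self h ▸ (analyticAt_cgf h).differentiableAt.hasDerivAt
  exact (h_cgf.comp s (hasDerivAt_inv hs)).congr_deriv (by ring)

lemma integral_sub_sq_eq_sq_add_variance [IsProbabilityMeasure μ] (hX : MemLp X 2 μ) (c : ℝ) :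
    ∫ ω, (X ω - c) ^ 2 ∂μ = (μ[X] - c) ^ 2 + Var[X; μ] := by
  have h_var := variance_eq_sub (hX.sub (memLp_const c))
  have h_mean : ∫ ω, (X ω - c) ∂μ = μ[X] - c := by
    simp [integral_sub (hX.integrable one_le_two) (integrable_const c)]
  simp only [Pi.sub_def, Pi.pow_def, variance_sub_const hX.aestronglyMeasurable, h_mean] at h_var
  linarith

end ExponentialTilting

section GaussianPosterior

/-- The posterior law of an unknown `x` with prior `μ`, given that `R` was observed as `x` plus a
centred Gaussian noise of variance `s`. The prior may have infinite mass: `Measure.tilted`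
normalises whenever the Gaussian weight is `μ`-integrable, and gives the zero measure otherwise. -/
noncomputable def gaussianPosterior (μ : Measure ℝ) (R s : ℝ) : Measure ℝ :=
  μ.tilted fun x ↦ -(x - R) ^ 2 / (2 * s)

lemma gaussianPosterior_eq_tilted_inv_mul (μ : Measure ℝ) (R s : ℝ) :
    gaussianPosterior μ R s = μ.tilted fun x ↦ s⁻¹ * (-(x - R) ^ 2 / 2) := by
  rw [gaussianPosterior]
  congr with x
  ring

lemma log_integral_exp_neg_sq_div_eq_cgf (μ : Measure ℝ) (R s : ℝ) :
    Real.log (∫ x, Real.exp (-(x - R) ^ 2 / (2 * s)) ∂μ) =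
      cgf (fun x ↦ -(x - R) ^ 2 / 2) μ s⁻¹ := by
  rw [cgf, mgf]
  congr with x
  ring_nf

lemma integral_gaussianPosterior (μ : Measure ℝ) (R s : ℝ) (g : ℝ → ℝ) :
    ∫ x, g x ∂(gaussianPosterior μ R s) =
      (∫ x, Real.exp (-(x - R) ^ 2 / (2 * s)) ∂μ)⁻¹ *
        ∫ x, g x * Real.exp (-(x - R) ^ 2 / (2 * s)) ∂μ := by
  rw [gaussianPosterior, integral_tilted, ← integral_const_mul]
  congr with x
  rw [smul_eq_mul]
  ring

lemma inv_mem_interior_integrableExpSet_neg_sq (μ : Measure ℝ) [IsFiniteMeasure μ] (R : ℝ)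
    {s : ℝ} (hs : 0 < s) :
    s⁻¹ ∈ interior (integrableExpSet (fun x ↦ -(x - R) ^ 2 / 2) μ) :=
  mem_interior_integrableExpSet_of_nonpos (by fun_prop)
    (ae_of_all _ fun x ↦ by linarith [sq_nonneg (x - R)]) (inv_pos.2 hs)

variable {μ : Measure ℝ} {R s : ℝ}

lemma isProbabilityMeasure_gaussianPosterior [NeZero μ]
    (h : s⁻¹ ∈ interior (integrableExpSet (fun x ↦ -(x - R) ^ 2 / 2) μ)) :
    IsProbabilityMeasure (gaussianPosterior μ R s) := by
  rw [gaussianPosterior_eq_tilted_inv_mul]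
  exact isProbabilityMeasure_tilted (integrable_of_mem_integrableExpSet (interior_subset h))

lemma memLp_id_two_gaussianPosterior
    (h : s⁻¹ ∈ interior (integrableExpSet (fun x ↦ -(x - R) ^ 2 / 2) μ)) :
    MemLp id 2 (gaussianPosterior μ R s) := by
  have : IsFiniteMeasure (gaussianPosterior μ R s) := by rw [gaussianPosterior]; infer_instance
  have h_int : Integrable (fun x ↦ -(x - R) ^ 2 / 2) (gaussianPosterior μ R s) := by
    rw [gaussianPosterior_eq_tilted_inv_mul]
    exact memLp_one_iff_integrable.1 (memLp_tilted_mul h 1)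
  have h_sub : MemLp (fun x ↦ x - R) 2 (gaussianPosterior μ R s) :=
    (memLp_two_iff_integrable_sq (by fun_prop)).2 <|
      (h_int.const_mul (-2)).congr (ae_of_all _ fun x ↦ by ring)
  exact (h_sub.add (memLp_const R)).ae_eq (ae_of_all _ fun x ↦ sub_add_cancel x R)

theorem stmt1_general [NeZero μ] (hs : s ≠ 0)
    (h : s⁻¹ ∈ interior (integrableExpSet (fun x ↦ -(x - R) ^ 2 / 2) μ)) :
    HasDerivAt (fun u ↦ Real.log (∫ x, Real.exp (-(x - R) ^ 2 / (2 * u)) ∂μ))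
      ((((gaussianPosterior μ R s)[id] - R) ^ 2 + Var[id; gaussianPosterior μ R s]) / (2 * s ^ 2))
      s := by
  have := isProbabilityMeasure_gaussianPosterior h
  simp_rw [log_integral_exp_neg_sq_div_eq_cgf]
  refine (hasDerivAt_cgf_inv hs h).congr_deriv ?_
  rw [← gaussianPosterior_eq_tilted_inv_mul,
    ← integral_sub_sq_eq_sq_add_variance (memLp_id_two_gaussianPosterior h), integral_div,
    integral_neg]
  simp only [id]
  ring

end GaussianPosterior

lemma isProbabilityMeasure_P0 {ρ : ℝ} (hρ : ρ ∈ Set.Icc (0 : ℝ) 1) :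
    IsProbabilityMeasure (P0 ρ) := by
  constructor
  simp [P0, ← ENNReal.ofReal_add hρ.1 (sub_nonneg.2 hρ.2)]

lemma log_Zpart_sqrt_eventuallyEq (ρ R : ℝ) {s : ℝ} (hs : 0 < s) :
    (fun u ↦ Real.log (Zpart ρ R (Real.sqrt u))) =ᶠ[nhds s]
      fun u ↦ Real.log (∫ x, Real.exp (-(x - R) ^ 2 / (2 * u)) ∂(P0 ρ)) := by
  filter_upwards [Ioi_mem_nhds hs] with u hu
  rw [Zpart, Real.sq_sqrt (le_of_lt hu)]

lemma fa_eq_integral_gaussianPosterior (ρ R σ : ℝ) :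
    fa ρ R σ = (gaussianPosterior (P0 ρ) R (σ ^ 2))[id] :=
  (integral_gaussianPosterior (P0 ρ) R (σ ^ 2) id).symm

lemma fc_eq_variance_gaussianPosterior {ρ : ℝ} (hρ : ρ ∈ Set.Icc (0 : ℝ) 1) (R : ℝ) {σ : ℝ}
    (hσ : σ ≠ 0) :
    fc ρ R σ = Var[id; gaussianPosterior (P0 ρ) R (σ ^ 2)] := by
  have := isProbabilityMeasure_P0 hρ
  have h := inv_mem_interior_integrableExpSet_neg_sq (P0 ρ) R (sq_pos_of_ne_zero hσ)
  have := isProbabilityMeasure_gaussianPosterior h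
  rw [variance_eq_sub (memLp_id_two_gaussianPosterior h), integral_gaussianPosterior, fc,
    fa_eq_integral_gaussianPosterior]
  rfl

/-- the log-partition as a function of the variance `s = Σ²`,
`s ↦ log Z(R,√s)`, has derivative at `s = Σ²` equal to
`((f_a(R,Σ) − R)² + f_c(R,Σ))/(2Σ⁴)`. -/
theorem stmt1 (ρ : ℝ) (hρ : ρ ∈ Set.Icc (0 : ℝ) 1) (R σ : ℝ) (hσ : 0 < σ) :
    HasDerivAt (fun s => Real.log (Zpart ρ R (Real.sqrt s)))
      (((fa ρ R σ - R) ^ 2 + fc ρ R σ) / (2 * σ ^ 4)) (σ ^ 2) := by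
  have := isProbabilityMeasure_P0 hρ
  have h := inv_mem_interior_integrableExpSet_neg_sq (P0 ρ) R (sq_pos_of_pos hσ)
  simpa only [fa_eq_integral_gaussianPosterior, fc_eq_variance_gaussianPosterior hρ R hσ.ne',
    ← pow_mul] using (stmt1_general (sq_pos_of_pos hσ).ne' h).congr_of_eventuallyEq
      (log_Zpart_sqrt_eventuallyEq ρ R (sq_pos_of_pos hσ))
end

section
/- (KL identity, Eq. (35).) Let p : ℝ → ℝ be measurable and nonnegative, V > 0 and ω ∈ ℝ, and suppose there exists V' > V such that ∫ (1 + z²)·p(z)·exp(−(z−ω)²/(2V')) dz < ∞ and Z_out(ω,V) > 0. Let Z^μ = (2πV)^{−1/2}·Z_out(ω,V), and let 𝓜 be the probability density 𝓜(z) = p(z)·(2πV)^{−1/2}·exp(−(z−ω)²/(2V))/Z^μ. Then, with the convention 0·log(0/0) = 0, −∫ 𝓜(z)·log(𝓜(z)/p(z)) dz = log Z^μ + (1/2)·(log(2πV) + 1 + V·(g'_out(ω,V) + g_out(ω,V)²)), where g'_out(ω,V) denotes the derivative at ω of the function ω' ↦ g_out(ω',V). -/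
open MeasureTheory

/-- Output-channel partition function `Z_out(ω,V) = ∫ p(z)·exp(−(z−ω)²/(2V)) dz`. -/
noncomputable def Zout (p : ℝ → ℝ) (ω V : ℝ) : ℝ :=
  ∫ z, p z * Real.exp (-(z - ω) ^ 2 / (2 * V))

/-- The output function
`g_out(ω,V) = [∫ p(z)·(z−ω)·exp(−(z−ω)²/(2V)) dz]/(V·Z_out(ω,V))`. -/
noncomputable def gout (p : ℝ → ℝ) (ω V : ℝ) : ℝ :=
  (∫ z, p z * (z - ω) * Real.exp (-(z - ω) ^ 2 / (2 * V))) / (V * Zout p ω V)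

/-- The normalized per-measurement partition function `Z^μ(ω,V) = (2πV)^{−1/2}·Z_out(ω,V)`. -/
noncomputable def Zmu (p : ℝ → ℝ) (ω V : ℝ) : ℝ :=
  (Real.sqrt (2 * Real.pi * V))⁻¹ * Zout p ω V

/-! Write `Mₙ(ω) = ∫ p(z)·(z−ω)ⁿ·exp(−(z−ω)²/(2V)) dz`, so that `Z_out = M₀` and
`g_out = M₁/(V·M₀)`. Differentiating under the integral gives `Mₙ' = Mₙ₊₁/V − n·Mₙ₋₁`, whence the
quotient rule yields `V·(g_out' + g_out²) + 1 = M₂/(V·M₀)`. On the other side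
`𝓜/p = exp(−(z−ω)²/(2V))/M₀`, so the negative relative entropy is `log M₀ + M₂/(2V·M₀)`; the two
agree because `log Z^μ = log M₀ − log(2πV)/2`. -/

/-- The function `t ↦ tⁿ·exp(−t²/(2V))`, whose translates are the kernels of `Zout` and `gout` and
of their derivatives in `ω`. -/
noncomputable def powGaussian (V : ℝ) (n : ℕ) (t : ℝ) : ℝ :=
  t ^ n * Real.exp (-t ^ 2 / (2 * V))

/-- The unnormalized `n`-th moment about `ω` of the weight `p` under the Gaussian of variance `V`
centred at `ω`, with respect to a reference measure `μ`. -/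
noncomputable def gaussianMoment (μ : Measure ℝ) (p : ℝ → ℝ) (V : ℝ) (n : ℕ) (ω : ℝ) : ℝ :=
  ∫ z, p z * powGaussian V n (z - ω) ∂μ

lemma continuous_powGaussian (V : ℝ) (n : ℕ) : Continuous (powGaussian V n) := by
  unfold powGaussian
  fun_prop

lemma hasDerivAt_powGaussian (V : ℝ) (n : ℕ) (t : ℝ) :
    HasDerivAt (powGaussian V n) (n * powGaussian V (n - 1) t - powGaussian V (n + 1) t / V) t := by
  have hexp : HasDerivAt (fun t : ℝ => Real.exp (-t ^ 2 / (2 * V)))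
      (Real.exp (-t ^ 2 / (2 * V)) * (-t / V)) t := by
    have hquad : HasDerivAt (fun t : ℝ => -t ^ 2 / (2 * V)) (-t / V) t :=
      ((hasDerivAt_pow 2 t).fun_neg.div_const (2 * V)).congr_deriv (by
        rw [← mul_div_mul_left (-t) V two_ne_zero]
        norm_num)
    exact hquad.exp
  exact ((hasDerivAt_pow n t).mul hexp).congr_deriv (by simp only [powGaussian]; ring)

lemma exists_abs_powGaussian_le {V V' : ℝ} (hV : 0 < V) (hVV' : V < V') (n : ℕ) (r : ℝ) :
    ∃ C, ∀ s t, |t - s| ≤ r → |powGaussian V n s| ≤ C * Real.exp (-t ^ 2 / (2 * V')) := by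
  have hV' : 0 < V' := hV.trans hVV'
  -- Since `|s|ⁿ ≤ n!·exp |s|` and `t² ≤ (|s| + r)²`, it suffices to bound above the quadratic
  -- `b|s| − a|s|²`, whose leading coefficient is negative because `V < V'`.
  set a := 1 / (2 * V) - 1 / (2 * V') with ha_def
  set b := 1 + r / V' with hb_def
  have ha : 0 < a := sub_pos.mpr (by gcongr)
  refine ⟨n.factorial * Real.exp (b ^ 2 / (4 * a) + r ^ 2 / (2 * V')), fun s t hst => ?_⟩
  have hpow : |s| ^ n ≤ n.factorial * Real.exp |s| :=
    (div_le_iff₀' (by positivity)).mp (Real.pow_div_factorial_le_exp |s| (abs_nonneg s) n)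
  have ht : t ^ 2 ≤ (|s| + r) ^ 2 := by
    have : |t| ≤ |s| + r := by linarith [abs_sub_abs_le_abs_sub t s]
    rw [← sq_abs t]
    gcongr
  have hsquare : b * |s| - a * |s| ^ 2 ≤ b ^ 2 / (4 * a) := by
    rw [le_div_iff₀ (by positivity)]
    nlinarith [sq_nonneg (2 * a * |s| - b)]
  have hexponent : |s| + -s ^ 2 / (2 * V) ≤
      b ^ 2 / (4 * a) + r ^ 2 / (2 * V') + -t ^ 2 / (2 * V') := by
    have hdiv : t ^ 2 / (2 * V') ≤ (|s| + r) ^ 2 / (2 * V') := by gcongr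
    have hexpand : |s| + -s ^ 2 / (2 * V) + (|s| + r) ^ 2 / (2 * V') =
        b * |s| - a * |s| ^ 2 + r ^ 2 / (2 * V') := by
      rw [ha_def, hb_def, ← sq_abs s]
      ring
    rw [neg_div _ (t ^ 2)]
    linarith
  calc |powGaussian V n s| = |s| ^ n * Real.exp (-s ^ 2 / (2 * V)) := by
        rw [powGaussian, abs_mul, abs_pow, Real.abs_exp]
    _ ≤ n.factorial * Real.exp |s| * Real.exp (-s ^ 2 / (2 * V)) := by gcongr
    _ = n.factorial * Real.exp (|s| + -s ^ 2 / (2 * V)) := by rw [mul_assoc, ← Real.exp_add]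
    _ ≤ n.factorial *
        Real.exp (b ^ 2 / (4 * a) + r ^ 2 / (2 * V') + -t ^ 2 / (2 * V')) := by gcongr
    _ = _ := by rw [Real.exp_add _ (-t ^ 2 / (2 * V')), mul_assoc]

section GaussianMoment

variable {μ : Measure ℝ} {p : ℝ → ℝ} {V V' ω : ℝ}

lemma integrable_mul_powGaussian (hV : 0 < V) (hVV' : V < V')
    (hint : Integrable (fun z => p z * Real.exp (-(z - ω) ^ 2 / (2 * V'))) μ) (n : ℕ) (x : ℝ) :
    Integrable (fun z => p z * powGaussian V n (z - x)) μ := by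
  obtain ⟨C, hC⟩ := exists_abs_powGaussian_le hV hVV' n |x - ω|
  have hcont : Continuous fun z =>
      powGaussian V n (z - x) / Real.exp (-(z - ω) ^ 2 / (2 * V')) :=
    ((continuous_powGaussian V n).comp (by fun_prop)).div (by fun_prop) fun _ => Real.exp_ne_zero _
  have hbdd : ∀ z, ‖powGaussian V n (z - x) / Real.exp (-(z - ω) ^ 2 / (2 * V'))‖ ≤ C := fun z => by
    rw [Real.norm_eq_abs, abs_div, Real.abs_exp, div_le_iff₀ (Real.exp_pos _)]
    exact hC _ _ (by rw [sub_sub_sub_cancel_left])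
  refine (hint.mul_bdd hcont.aestronglyMeasurable (ae_of_all _ hbdd)).congr
    (ae_of_all _ fun z => ?_)
  field_simp

lemma exists_norm_mul_powGaussian_le (hV : 0 < V) (hVV' : V < V') (p : ℝ → ℝ) (ω : ℝ) (n : ℕ)
    (r : ℝ) :
    ∃ C, ∀ z, ∀ x ∈ Metric.closedBall ω r, ‖p z * powGaussian V n (z - x)‖ ≤
      C * ‖p z * Real.exp (-(z - ω) ^ 2 / (2 * V'))‖ := by
  obtain ⟨C, hC⟩ := exists_abs_powGaussian_le hV hVV' n r
  refine ⟨C, fun z x hx => ?_⟩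
  have hkernel : |powGaussian V n (z - x)| ≤ C * Real.exp (-(z - ω) ^ 2 / (2 * V')) :=
    hC _ _ (by rwa [sub_sub_sub_cancel_left])
  rw [norm_mul, norm_mul, Real.norm_eq_abs (powGaussian _ _ _), Real.norm_eq_abs (Real.exp _),
    Real.abs_exp, mul_left_comm]
  gcongr

lemma exists_norm_mul_powGaussian_sub_le (hV : 0 < V) (hVV' : V < V') (p : ℝ → ℝ) (ω : ℝ) (n : ℕ)
    (r : ℝ) :
    ∃ C, ∀ z, ∀ x ∈ Metric.closedBall ω r,
      ‖p z * powGaussian V (n + 1) (z - x) / V - n * (p z * powGaussian V (n - 1) (z - x))‖ ≤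
        C * ‖p z * Real.exp (-(z - ω) ^ 2 / (2 * V'))‖ := by
  obtain ⟨C₁, hC₁⟩ := exists_norm_mul_powGaussian_le hV hVV' p ω (n + 1) r
  obtain ⟨C₂, hC₂⟩ := exists_norm_mul_powGaussian_le hV hVV' p ω (n - 1) r
  refine ⟨C₁ / V + n * C₂, fun z x hx => ?_⟩
  calc ‖p z * powGaussian V (n + 1) (z - x) / V - n * (p z * powGaussian V (n - 1) (z - x))‖
      ≤ ‖p z * powGaussian V (n + 1) (z - x) / V‖ +
        ‖n * (p z * powGaussian V (n - 1) (z - x))‖ := norm_sub_le _ _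
    _ = ‖p z * powGaussian V (n + 1) (z - x)‖ / V +
        n * ‖p z * powGaussian V (n - 1) (z - x)‖ := by
      rw [norm_div, norm_mul (n : ℝ), Real.norm_of_nonneg hV.le, Real.norm_natCast]
    _ ≤ C₁ * ‖p z * Real.exp (-(z - ω) ^ 2 / (2 * V'))‖ / V +
        n * (C₂ * ‖p z * Real.exp (-(z - ω) ^ 2 / (2 * V'))‖) := by
      gcongr
      exacts [hC₁ z x hx, hC₂ z x hx]
    _ = _ := by ring

lemma hasDerivAt_gaussianMoment (hV : 0 < V) (hVV' : V < V')
    (hint : Integrable (fun z => p z * Real.exp (-(z - ω) ^ 2 / (2 * V'))) μ) (n : ℕ) (x : ℝ) :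
    HasDerivAt (gaussianMoment μ p V n)
      (gaussianMoment μ p V (n + 1) x / V - n * gaussianMoment μ p V (n - 1) x) x := by
  have hmoment := integrable_mul_powGaussian hV hVV' hint
  have hnext := (hmoment (n + 1) x).div_const V
  have hprev := (hmoment (n - 1) x).const_mul n
  obtain ⟨C, hC⟩ := exists_norm_mul_powGaussian_sub_le hV hVV' p ω n (1 + dist x ω)
  have hball : Metric.ball x 1 ⊆ Metric.closedBall ω (1 + dist x ω) :=
    (Metric.ball_subset_ball' le_rfl).trans Metric.ball_subset_closedBall
  have hderiv : ∀ z y, HasDerivAt (fun y => p z * powGaussian V n (z - y))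
      (p z * powGaussian V (n + 1) (z - y) / V - n * (p z * powGaussian V (n - 1) (z - y))) y :=
    fun z y => (((hasDerivAt_powGaussian V n (z - y)).comp_const_sub z y).const_mul
      (p z)).congr_deriv (by ring)
  refine (hasDerivAt_integral_of_dominated_loc_of_deriv_le (Metric.ball_mem_nhds x one_pos)
    (.of_forall fun y => (hmoment n y).aestronglyMeasurable) (hmoment n x)
    (hnext.sub hprev).aestronglyMeasurable (ae_of_all _ fun z y hy => hC z y (hball hy))
    (hint.norm.const_mul C) (ae_of_all _ fun z y _ => hderiv z y)).2.congr_deriv ?_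
  rw [integral_sub hnext hprev, integral_div, integral_const_mul]
  rfl

end GaussianMoment

lemma integrable_of_one_le_mul {α : Type*} [MeasurableSpace α] {μ : Measure α} {w f : α → ℝ}
    (hw : AEMeasurable w μ) (hw1 : ∀ᵐ z ∂μ, 1 ≤ w z) (hint : Integrable (fun z => w z * f z) μ) :
    Integrable f μ := by
  have hinv : ∀ᵐ z ∂μ, ‖(w z)⁻¹‖ ≤ 1 := hw1.mono fun z hz => by
    rw [norm_inv]
    exact inv_le_one_of_one_le₀ (hz.trans (Real.le_norm_self _))
  exact (hint.bdd_mul hw.inv.aestronglyMeasurable hinv).congr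
    (hw1.mono fun z hz => inv_mul_cancel_left₀ (zero_lt_one.trans_le hz).ne' (f z))

lemma integral_gibbs_mul_log_div {α : Type*} [MeasurableSpace α] {μ : Measure α} {p h : α → ℝ}
    {Z : ℝ} (hint : Integrable (fun z => p z * Real.exp (h z)) μ)
    (hint_mul : Integrable (fun z => p z * Real.exp (h z) * h z) μ)
    (hZ : ∫ z, p z * Real.exp (h z) ∂μ = Z) (hZ0 : Z ≠ 0) :
    ∫ z, p z * Real.exp (h z) / Z * Real.log (p z * Real.exp (h z) / Z / p z) ∂μ =
      (∫ z, p z * Real.exp (h z) * h z ∂μ) / Z - Real.log Z := by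
  have hlog : ∀ z, p z * Real.exp (h z) / Z * Real.log (p z * Real.exp (h z) / Z / p z) =
      p z * Real.exp (h z) * h z / Z - p z * Real.exp (h z) * (Real.log Z / Z) := fun z => by
    rcases eq_or_ne (p z) 0 with hpz | hpz
    · simp [hpz]
    · have hratio : p z * Real.exp (h z) / Z / p z = Real.exp (h z) / Z := by field_simp
      rw [hratio, Real.log_div (Real.exp_ne_zero _) hZ0, Real.log_exp]
      ring
  simp_rw [hlog]
  rw [integral_sub (hint_mul.div_const Z) (hint.mul_const _), integral_div, integral_mul_const, hZ,
    mul_div_cancel₀ _ hZ0]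

section OutputChannel

variable {p : ℝ → ℝ} {V V' ω : ℝ}

lemma Zout_eq_gaussianMoment (p : ℝ → ℝ) (ω V : ℝ) :
    Zout p ω V = gaussianMoment volume p V 0 ω := by
  simp only [Zout, gaussianMoment, powGaussian, pow_zero, one_mul]

lemma gout_eq_gaussianMoment_div (p : ℝ → ℝ) (ω V : ℝ) :
    gout p ω V = gaussianMoment volume p V 1 ω / (V * gaussianMoment volume p V 0 ω) := by
  simp only [gout, Zout_eq_gaussianMoment, gaussianMoment, powGaussian, pow_one, mul_assoc]

lemma hasDerivAt_gout (hV : 0 < V) (hVV' : V < V')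
    (hint : Integrable fun z => p z * Real.exp (-(z - ω) ^ 2 / (2 * V'))) {x : ℝ}
    (hZ : Zout p x V ≠ 0) :
    HasDerivAt (fun x => gout p x V)
      (gaussianMoment volume p V 2 x / (V ^ 2 * Zout p x V) - 1 / V - gout p x V ^ 2) x := by
  rw [Zout_eq_gaussianMoment] at hZ
  have hquot := (hasDerivAt_gaussianMoment hV hVV' hint 1 x).fun_div
    ((hasDerivAt_gaussianMoment hV hVV' hint 0 x).const_mul V) (mul_ne_zero hV.ne' hZ)
  simp only [gout_eq_gaussianMoment_div, Zout_eq_gaussianMoment]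
  refine hquot.congr_deriv ?_
  simp only [Nat.cast_one, Nat.cast_zero, one_mul, zero_mul, sub_zero, Nat.sub_self, zero_add,
    Nat.reduceAdd]
  field_simp

lemma log_Zmu (hV : 0 < V) (hZ : Zout p ω V ≠ 0) :
    Real.log (Zmu p ω V) =
      Real.log (Zout p ω V) - 1 / 2 * Real.log (2 * Real.pi * V) := by
  have hsqrt : Real.sqrt (2 * Real.pi * V) ≠ 0 := by positivity
  rw [Zmu, Real.log_mul (inv_ne_zero hsqrt) hZ, Real.log_inv, Real.log_sqrt (by positivity)]
  ring

lemma mul_inv_sqrt_mul_exp_div_Zmu (hV : 0 < V) (z : ℝ) :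
    p z * (Real.sqrt (2 * Real.pi * V))⁻¹ * Real.exp (-(z - ω) ^ 2 / (2 * V)) / Zmu p ω V =
      p z * Real.exp (-(z - ω) ^ 2 / (2 * V)) / Zout p ω V := by
  have hsqrt : (Real.sqrt (2 * Real.pi * V))⁻¹ ≠ 0 := by positivity
  rw [Zmu, mul_right_comm, mul_comm _ (Zout p ω V), mul_div_mul_right _ _ hsqrt]

lemma integral_mul_exp_div_Zout_mul_log (hV : 0 < V) (hVV' : V < V')
    (hint : Integrable fun z => p z * Real.exp (-(z - ω) ^ 2 / (2 * V'))) {x : ℝ}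
    (hZ : Zout p x V ≠ 0) :
    ∫ z, p z * Real.exp (-(z - x) ^ 2 / (2 * V)) / Zout p x V *
        Real.log (p z * Real.exp (-(z - x) ^ 2 / (2 * V)) / Zout p x V / p z) =
      -gaussianMoment volume p V 2 x / (2 * V * Zout p x V) - Real.log (Zout p x V) := by
  have hmoment := integrable_mul_powGaussian hV hVV' hint
  have henergy : ∀ z, p z * Real.exp (-(z - x) ^ 2 / (2 * V)) * (-(z - x) ^ 2 / (2 * V)) =
      -(p z * powGaussian V 2 (z - x)) / (2 * V) := fun z => by
    rw [powGaussian]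
    ring
  have hint_weight : Integrable fun z => p z * Real.exp (-(z - x) ^ 2 / (2 * V)) := by
    simpa only [powGaussian, pow_zero, one_mul] using hmoment 0 x
  have hint_energy : Integrable fun z =>
      p z * Real.exp (-(z - x) ^ 2 / (2 * V)) * (-(z - x) ^ 2 / (2 * V)) := by
    simpa only [henergy] using (hmoment 2 x).fun_neg.div_const (2 * V)
  have hgibbs := integral_gibbs_mul_log_div (Z := Zout p x V) hint_weight hint_energy rfl hZ
  simp only [henergy] at hgibbs
  rw [hgibbs, integral_div, integral_neg, div_div]
  rfl

end OutputChannel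

theorem stmt15_general (p : ℝ → ℝ) (V ω : ℝ) (hV : 0 < V)
    (hdom : ∃ V' > V, Integrable (fun z => p z * Real.exp (-(z - ω) ^ 2 / (2 * V'))))
    (hZ : 0 < Zout p ω V)
    (𝓜 : ℝ → ℝ)
    (h𝓜 : 𝓜 = fun z =>
      p z * (Real.sqrt (2 * Real.pi * V))⁻¹ * Real.exp (-(z - ω) ^ 2 / (2 * V)) / Zmu p ω V) :
    -(∫ z, 𝓜 z * Real.log (𝓜 z / p z))
      = Real.log (Zmu p ω V)
        + 1 / 2 * (Real.log (2 * Real.pi * V) + 1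
            + V * (deriv (fun ω' => gout p ω' V) ω + gout p ω V ^ 2)) := by
  obtain ⟨V', hVV', hint⟩ := hdom
  rw [(hasDerivAt_gout hV hVV' hint hZ.ne').deriv, log_Zmu hV hZ.ne', h𝓜]
  simp only [mul_inv_sqrt_mul_exp_div_Zmu hV]
  rw [integral_mul_exp_div_Zout_mul_log hV hVV' hint hZ.ne']
  field_simp
  ring

/-- KL identity, Eq. (35): with `Z^μ = (2πV)^{−1/2}·Z_out(ω,V)` and the
probability density `𝓜(z) = p(z)·(2πV)^{−1/2}·exp(−(z−ω)²/(2V))/Z^μ`, one has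
`−∫ 𝓜(z)·log(𝓜(z)/p(z)) dz = log Z^μ + (1/2)(log(2πV) + 1 + V(g'_out + g_out²))`.
(The convention `0·log(0/0) = 0` holds automatically in Lean since `0/0 = 0` and
`log 0 = 0`.) -/
theorem stmt15 (p : ℝ → ℝ) (hp : Measurable p) (hp0 : ∀ z, 0 ≤ p z)
    (V ω : ℝ) (hV : 0 < V)
    (hdom : ∃ V' > V,
      Integrable (fun z => (1 + z ^ 2) * p z * Real.exp (-(z - ω) ^ 2 / (2 * V'))))
    (hZ : 0 < Zout p ω V)
    (𝓜 : ℝ → ℝ)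
    (h𝓜 : 𝓜 = fun z =>
      p z * (Real.sqrt (2 * Real.pi * V))⁻¹ * Real.exp (-(z - ω) ^ 2 / (2 * V)) / Zmu p ω V) :
    -(∫ z, 𝓜 z * Real.log (𝓜 z / p z))
      = Real.log (Zmu p ω V)
        + 1 / 2 * (Real.log (2 * Real.pi * V) + 1
            + V * (deriv (fun ω' => gout p ω' V) ω + gout p ω V ^ 2)) :=
  stmt15_general p V ω hV (hdom.imp fun _ h => ⟨h.1, integrable_of_one_le_mul
    (by fun_prop) (ae_of_all _ fun z => le_add_of_nonneg_right (sq_nonneg z))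
    (by simpa only [mul_assoc] using h.2)⟩) hZ 𝓜 h𝓜
end
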